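/- For every integer n ≥ 2, the q,t-derangement polynomial has the γ-expansion d_n(q,t) = Σ_{k=0}^{⌊(n−2)/2⌋} ξ⁰_{n,k}(q) · t^{k+1} (1+t)^{n−2−2k}, where ξ⁰_{n,k}(q) = Σ q^{inv(σ)}, the sum running over all permutations σ ∈ S_n whose descent set DES(σ) is a subset of {2,…,n−2} containing no two consecutive integers and has exactly k elements (i.e., σ has k descents, no double descents, no first descent, and no last descent). -/

import Mathlib

open Polynomial Finset

/-- `S` contains no two consecutive integers. -/
def NoTwoConsec (S : Finset ℕ) : Prop := ∀ i ∈ S, i + 1 ∉ S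

instance (S : Finset ℕ) : Decidable (NoTwoConsec S) :=
  inferInstanceAs (Decidable (∀ i ∈ S, i + 1 ∉ S))

/-- `σ(i)` in one-line notation, as a value in `{1, …, n}` for `i ∈ {1, …, n}`
(and `0` for out-of-range `i`). -/
def pval {n : ℕ} (σ : Equiv.Perm (Fin n)) (i : ℕ) : ℕ :=
  if h : 1 ≤ i ∧ i ≤ n then (σ ⟨i - 1, by omega⟩ : ℕ) + 1 else 0

/-- The descent set `DES(σ) = {i ∈ {1,…,n-1} : σ(i) > σ(i+1)}`. -/
def pDES {n : ℕ} (σ : Equiv.Perm (Fin n)) : Finset ℕ :=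
  (Finset.Icc 1 (n - 1)).filter fun i => pval σ (i + 1) < pval σ i

/-- The major index `maj(σ) = Σ_{i ∈ DES(σ)} i`. -/
def pmaj {n : ℕ} (σ : Equiv.Perm (Fin n)) : ℕ := ∑ i ∈ pDES σ, i

/-- The excedance number `exc(σ) = #{i : σ(i) > i}`. -/
def pexc {n : ℕ} (σ : Equiv.Perm (Fin n)) : ℕ :=
  ((Finset.Icc 1 n).filter fun i => i < pval σ i).card

/-- The inversion number `inv(σ) = #{(i,j) : 1 ≤ i < j ≤ n, σ(i) > σ(j)}`. -/
def pinv {n : ℕ} (σ : Equiv.Perm (Fin n)) : ℕ :=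
  (((Finset.Icc 1 n) ×ˢ (Finset.Icc 1 n)).filter
    fun p => p.1 < p.2 ∧ pval σ p.2 < pval σ p.1).card

/-- The `q,t`-derangement polynomial
`d_n(q,t) = Σ_{σ ∈ D_n} q^{maj(σ)-exc(σ)} t^{exc(σ)}`, as an element of
`ℤ[q][t]` (`q` is the inner variable, `t` the outer one). -/
noncomputable def dpoly (n : ℕ) : Polynomial (Polynomial ℤ) :=
  ∑ σ ∈ Finset.univ.filter (fun σ : Equiv.Perm (Fin n) => ∀ i, σ i ≠ i),
    Polynomial.C (Polynomial.X ^ (pmaj σ - pexc σ)) * Polynomial.X ^ pexc σ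

/-! Consider words weighted by `t` to the number of letters exceeding the letter at the same
position of the sorted word, no letter being allowed to equal it. MacMahon's master theorem turns
their generating function into the inverse of a determinant, which is a combination of two products
`∏ (1 + c x i)`. Standardising words to permutations and specialising `x i` to `q ^ i` gives a
recurrence, with `q`-elementary coefficients, for the sum of `t ^ exc σ * q ^ codex σ` over
derangements, where `maj - exc + codex` is the constant `n.choose 2`.

Any recurrence of this shape is solved by a sum over all permutations of `q ^ coinv σ` times the
weights of the maximal ascending runs of `σ`. Here a run of length one turns out to have weight `0`
and a run of length `m ≥ 2` weight `t * (1 + t) ^ (m - 2)`, so exactly the permutations without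
double, first or last descents survive. Replacing `q` by `q⁻¹` exchanges `codex` with `maj - exc`
and `coinv` with `inv`. -/

section MacMahon

variable {R : Type*} [CommRing R]

theorem mul_geom_sum_of_pow_eq_zero {K : ℕ} {z u : R} (hz : z ^ K = 0) (hu : u * (1 - z) = 1) :
    ∑ m ∈ range K, z ^ m = u := by
  have h := mul_neg_geom_sum z K
  rw [hz, sub_zero] at h
  linear_combination u * h - (∑ m ∈ range K, z ^ m) * hu

-- The left side `T F` is linear in `F`, and extracting one factor `b + s X` from the `m`-th power
-- gives `T (X F) = y b T F + y s T (X F)`, the top term being killed by `y ^ (K + 1) = 0`.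
theorem sum_pow_mul_coeff_linear_pow_mul {K : ℕ} {b s y u : R} (hy : y ^ (K + 1) = 0)
    (hu : u * (1 - s * y) = 1) (F : R[X]) :
    ∑ m ∈ range (K + 1), y ^ m * ((C b + C s * X) ^ m * F).coeff m = u * F.eval (b * y * u) := by
  set T : R[X] → R := fun F ↦ ∑ m ∈ range (K + 1), y ^ m * ((C b + C s * X) ^ m * F).coeff m
  change T F = _
  have T_add (F G : R[X]) : T (F + G) = T F + T G := by
    simp only [T, mul_add, coeff_add, sum_add_distrib]
  have T_C_mul (a : R) (F : R[X]) : T (C a * F) = a * T F := by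
    simp only [T, mul_left_comm _ (C a), coeff_C_mul, mul_sum, mul_left_comm _ a]
  have T_one : T 1 = u := by
    have coeff_pow (m : ℕ) : ((C b + C s * X) ^ m).coeff m = s ^ m := by
      have hdeg : (C b + C s * X).natDegree ≤ 1 := by compute_degree
      have hcoeff : (C b + C s * X).coeff 1 = s := by simp
      rw [← hcoeff, ← coeff_pow_of_natDegree_le hdeg, mul_one, hcoeff]
    simp only [T, mul_one, coeff_pow, ← mul_pow, mul_comm y s]
    exact mul_geom_sum_of_pow_eq_zero (by rw [mul_pow, hy, mul_zero]) hu
  have T_X_mul (F : R[X]) : T (X * F) = y * T ((C b + C s * X) * F) := by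
    have shift (m : ℕ) : ((C b + C s * X) ^ (m + 1) * (X * F)).coeff (m + 1)
        = ((C b + C s * X) ^ m * ((C b + C s * X) * F)).coeff m := by
      rw [show (C b + C s * X) ^ (m + 1) * (X * F)
        = (C b + C s * X) ^ m * ((C b + C s * X) * F) * X by ring, coeff_mul_X]
    calc T (X * F)
        = ∑ m ∈ range (K + 2), y ^ m * ((C b + C s * X) ^ m * (X * F)).coeff m := by
          rw [sum_range_succ _ (K + 1), hy, zero_mul, add_zero]
      _ = y * T ((C b + C s * X) * F) := by
          rw [sum_range_succ']
          simp only [shift, pow_succ' y, T, mul_sum, mul_assoc, pow_zero, one_mul, coeff_X_mul_zero,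
            add_zero]
  induction F using Polynomial.induction_on with
  | C a => rw [← mul_one (C a), T_C_mul, T_one, eval_mul, eval_C, eval_one]; ring
  | add F G hF hG => rw [T_add, hF, hG, eval_add, mul_add]
  | monomial n a ih =>
    set G := C a * X ^ n
    have hG : C a * X ^ (n + 1) = X * G := by simp only [G]; ring
    have h := T_X_mul G
    rw [add_mul, T_add, mul_assoc (C s), T_C_mul b, T_C_mul s, ih] at h
    rw [hG, eval_mul, eval_X]
    linear_combination u * h - T (X * G) * hu

/-- The Schur complement of the `0`-th pivot of `1 - diagonal y * A`, written again in the form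
`1 - diagonal (Fin.tail y) * A'`: this is the matrix `A'`, where `u` stands for the inverse of the
pivot `1 - y 0 * A 0 0`. -/
def schurStep {N : ℕ} (A : Matrix (Fin (N + 1)) (Fin (N + 1)) R) (y₀ u : R) :
    Matrix (Fin N) (Fin N) R :=
  Matrix.of fun i j ↦ A i.succ j.succ + A i.succ 0 * (u * y₀) * A 0 j.succ

theorem det_one_sub_diagonal_mul_eq_schurStep {N : ℕ} (A : Matrix (Fin (N + 1)) (Fin (N + 1)) R)
    (y : Fin (N + 1) → R) {u : R} (hu : u * (1 - A 0 0 * y 0) = 1) :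
    (1 - Matrix.diagonal y * A).det
      = (1 - A 0 0 * y 0) * (1 - Matrix.diagonal (Fin.tail y) * schurStep A (y 0) u).det := by
  set M := 1 - Matrix.diagonal y * A with hM
  have hM_apply (i j) : M i j = (if i = j then 1 else 0) - y i * A i j := by
    simp [hM, Matrix.one_apply, Matrix.diagonal_mul]
  set c : Fin (N + 1) → R := Fin.cons 0 fun i ↦ M i.succ 0 * u
  set B : Matrix (Fin (N + 1)) (Fin (N + 1)) R := Matrix.of fun i j ↦ M i j - c i * M 0 j
  have hdet : M.det = B.det :=
    Matrix.det_eq_of_forall_row_eq_smul_add_const c 0 rfl fun i j ↦ by simp [B, c]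
  rw [hdet, Matrix.det_succ_column_zero, sum_eq_single 0]
  · congr 1
    · simp [B, c, hM_apply, mul_comm]
    · congr 1
      ext i j
      simp only [Matrix.submatrix_apply, Fin.zero_succAbove, Matrix.of_apply, B, c, Fin.cons_succ,
        hM_apply, Fin.succ_ne_zero, (Fin.succ_ne_zero _).symm, if_false, Fin.succ_inj,
        Matrix.sub_apply, Matrix.one_apply, Matrix.diagonal_mul, Fin.tail, schurStep]
      ring
  · intro i _ hi
    obtain ⟨i, rfl⟩ := Fin.exists_succ_eq.2 hi
    have hB : B i.succ 0 = 0 := by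
      simp only [B, c, Matrix.of_apply, Fin.cons_succ, hM_apply, Fin.succ_ne_zero, if_true,
        if_false]
      linear_combination y i.succ * A i.succ 0 * hu
    rw [hB, mul_zero, zero_mul]
  · exact fun h ↦ absurd (mem_univ _) h

theorem finSuccEquiv_toMvPolynomial {ι : Type*} {N : ℕ} (A : Matrix ι (Fin (N + 1)) R) (i : ι) :
    MvPolynomial.finSuccEquiv R N (A.toMvPolynomial i)
      = C ((A.submatrix id Fin.succ).toMvPolynomial i) + C (MvPolynomial.C (A i 0)) * X := by
  simp only [Matrix.toMvPolynomial, ← MvPolynomial.C_mul_X_eq_monomial, map_sum, map_mul,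
    Fin.sum_univ_succ, Matrix.submatrix_apply, id_eq]
  simp [MvPolynomial.finSuccEquiv_apply, add_comm]

/-- The truncated generating function of the diagonal coefficients of the powers of the linear forms
given by the rows of `A`; no truncation is visible when `y i ^ (K + 1) = 0`. -/
noncomputable def diagonalCoeffSum (K : ℕ) {N : ℕ} (A : Matrix (Fin N) (Fin N) R) (y : Fin N → R) :
    R :=
  ∑ m ∈ Fintype.piFinset fun _ : Fin N ↦ range (K + 1), (∏ i, y i ^ m i) *
    MvPolynomial.coeff (Finsupp.equivFunOnFinite.symm m) (∏ i, A.toMvPolynomial i ^ m i)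

theorem sum_piFinset_succ {M : Type*} [AddCommMonoid M] {N : ℕ} (s : Finset ℕ)
    (f : (Fin (N + 1) → ℕ) → M) :
    ∑ m ∈ Fintype.piFinset fun _ ↦ s, f m
      = ∑ m ∈ Fintype.piFinset fun _ ↦ s, ∑ m₀ ∈ s, f (Fin.cons m₀ m) := by
  have h := Finset.filter_piFinset_eq_map_consEquiv (fun _ : Fin (N + 1) ↦ s) fun _ ↦ True
  rw [filter_true, filter_true] at h
  rw [h, sum_map, sum_product_right]
  rfl

theorem sum_pow_mul_coeff_cons {K N : ℕ} (A : Matrix (Fin (N + 1)) (Fin (N + 1)) R) {y₀ u : R}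
    (hy : y₀ ^ (K + 1) = 0) (hu : u * (1 - A 0 0 * y₀) = 1) (m : Fin N → ℕ) :
    ∑ m₀ ∈ range (K + 1), y₀ ^ m₀ *
        MvPolynomial.coeff (Finsupp.equivFunOnFinite.symm (Fin.cons m₀ m : Fin (N + 1) → ℕ))
          (∏ i, A.toMvPolynomial i ^ (Fin.cons m₀ m : Fin (N + 1) → ℕ) i)
      = u * MvPolynomial.coeff (Finsupp.equivFunOnFinite.symm m)
          (∏ i, (schurStep A y₀ u).toMvPolynomial i ^ m i) := by
  set L := (A.submatrix id Fin.succ).toMvPolynomial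
  set F : (MvPolynomial (Fin N) R)[X] :=
    ∏ i : Fin N, (C (L i.succ) + C (MvPolynomial.C (A i.succ 0)) * X) ^ m i with hF
  have coeff_cons (m₀ : ℕ) :
      MvPolynomial.coeff (Finsupp.equivFunOnFinite.symm (Fin.cons m₀ m : Fin (N + 1) → ℕ))
          (∏ i, A.toMvPolynomial i ^ (Fin.cons m₀ m : Fin (N + 1) → ℕ) i)
        = MvPolynomial.coeff (Finsupp.equivFunOnFinite.symm m)
          (((C (L 0) + C (MvPolynomial.C (A 0 0)) * X) ^ m₀ * F).coeff m₀) := by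
    have hcons : Finsupp.equivFunOnFinite.symm (Fin.cons m₀ m : Fin (N + 1) → ℕ)
        = (Finsupp.equivFunOnFinite.symm m).cons m₀ := by
      ext i; cases i using Fin.cases <;> simp
    rw [hcons, ← MvPolynomial.finSuccEquiv_coeff_coeff, Fin.prod_univ_succ]
    simp only [map_mul, map_prod, map_pow, finSuccEquiv_toMvPolynomial, Fin.cons_zero,
      Fin.cons_succ]
    rfl
  have eval_F : F.eval (L 0 * MvPolynomial.C y₀ * MvPolynomial.C u)
      = ∏ i, (schurStep A y₀ u).toMvPolynomial i ^ m i := by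
    rw [hF, eval_prod]
    refine prod_congr rfl fun i _ ↦ ?_
    simp only [eval_pow, eval_add, eval_mul, eval_C, eval_X, L, Matrix.toMvPolynomial, schurStep,
      Matrix.submatrix_apply, id_eq, Matrix.of_apply, ← MvPolynomial.C_mul_X_eq_monomial, sum_mul,
      mul_sum, ← sum_add_distrib, map_add, map_mul]
    congr 1
    exact sum_congr rfl fun j _ ↦ by ring
  have elim := sum_pow_mul_coeff_linear_pow_mul (b := L 0) (s := MvPolynomial.C (A 0 0))
    (y := MvPolynomial.C y₀) (u := MvPolynomial.C u) (K := K) (by rw [← map_pow, hy, map_zero])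
    (by rw [← map_one MvPolynomial.C, ← map_mul, ← map_sub, ← map_mul, hu]) F
  rw [eval_F] at elim
  simpa only [MvPolynomial.coeff_sum, ← map_pow, MvPolynomial.coeff_C_mul, coeff_cons] using
    congrArg (MvPolynomial.coeff (Finsupp.equivFunOnFinite.symm m)) elim

theorem diagonalCoeffSum_succ {K N : ℕ} (A : Matrix (Fin (N + 1)) (Fin (N + 1)) R)
    {y : Fin (N + 1) → R} {u : R} (hy : y 0 ^ (K + 1) = 0) (hu : u * (1 - A 0 0 * y 0) = 1) :
    diagonalCoeffSum K A y = u * diagonalCoeffSum K (schurStep A (y 0) u) (Fin.tail y) := by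
  rw [diagonalCoeffSum, sum_piFinset_succ, diagonalCoeffSum, mul_sum]
  refine sum_congr rfl fun m _ ↦ ?_
  rw [mul_left_comm, ← sum_pow_mul_coeff_cons A hy hu m, mul_sum]
  refine sum_congr rfl fun m₀ _ ↦ ?_
  rw [Fin.prod_univ_succ (fun i ↦ y i ^ _)]
  simp only [Fin.cons_zero, Fin.cons_succ, Fin.tail]
  ring

theorem macMahon_master (K : ℕ) {N : ℕ} (A : Matrix (Fin N) (Fin N) R) {y : Fin N → R}
    (hy : ∀ i, y i ^ (K + 1) = 0) :
    diagonalCoeffSum K A y * (1 - Matrix.diagonal y * A).det = 1 := by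
  induction N with
  | zero => simp [diagonalCoeffSum, Subsingleton.elim (Finsupp.equivFunOnFinite.symm _) 0]
  | succ N ih =>
    have pivot_isUnit : IsUnit (1 - A 0 0 * y 0) :=
      IsNilpotent.isUnit_one_sub ⟨K + 1, by rw [mul_pow, hy, mul_zero]⟩
    obtain ⟨u, hu⟩ := pivot_isUnit.exists_left_inv
    rw [diagonalCoeffSum_succ A (hy 0) hu, det_one_sub_diagonal_mul_eq_schurStep A y hu]
    linear_combination (diagonalCoeffSum K (schurStep A (y 0) u) (Fin.tail y) *
      (1 - Matrix.diagonal (Fin.tail y) * schurStep A (y 0) u).det) * hu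
      + ih (schurStep A (y 0) u) (y := Fin.tail y) fun i ↦ hy i.succ

end MacMahon

section Words

/-- The number of occurrences of each letter in the word `v`. -/
def wordContent {n N : ℕ} (v : Fin n → Fin N) (c : Fin N) : ℕ := #{j | v j = c}

theorem prod_comp_eq_prod_pow_wordContent {M : Type*} [CommMonoid M] {n N : ℕ} (v : Fin n → Fin N)
    (f : Fin N → M) : ∏ j, f (v j) = ∏ c, f c ^ wordContent v c := by
  simp only [← prod_fiberwise' univ v f, prod_const, wordContent]

theorem sum_wordContent {n N : ℕ} (v : Fin n → Fin N) : ∑ c, wordContent v c = n := by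
  simpa only [Fintype.card_fin, wordContent, card_univ] using
    (card_eq_sum_card_fiberwise (s := univ) fun j _ ↦ mem_univ (v j)).symm

theorem wordContent_comp_perm {n N : ℕ} (v : Fin n → Fin N) (π : Equiv.Perm (Fin n)) :
    wordContent (v ∘ π) = wordContent v := by
  funext c
  exact card_equiv π (by simp)

theorem equivFunOnFinite_symm_wordContent {n N : ℕ} (v : Fin n → Fin N) :
    Finsupp.equivFunOnFinite.symm (wordContent v) = ∑ j, Finsupp.single (v j) 1 := by
  ext c
  simp [wordContent, Finsupp.finsetSum_apply, Finsupp.single_apply]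

theorem exists_perm_of_wordContent_eq {n N : ℕ} {v w : Fin n → Fin N}
    (h : wordContent v = wordContent w) : ∃ π : Equiv.Perm (Fin n), v = w ∘ π := by
  have fiber_equiv (c : Fin N) : Nonempty ({j // v j = c} ≃ {j // w j = c}) :=
    ⟨Fintype.equivOfCardEq (by simpa only [Fintype.card_subtype, wordContent] using congrFun h c)⟩
  let e c := (fiber_equiv c).some
  exact ⟨Equiv.ofFiberEquiv e, funext fun j ↦ (Equiv.ofFiberEquiv_map e j).symm⟩

theorem exists_wordContent_eq {N : ℕ} (m : Fin N → ℕ) :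
    ∃ v : Fin (∑ i, m i) → Fin N, wordContent v = m := by
  refine ⟨fun j ↦ (finSigmaFinEquiv.symm j).1, funext fun c ↦ ?_⟩
  rw [wordContent, ← card_equiv finSigmaFinEquiv (s := {p : (i : Fin N) × Fin (m i) | p.1 = c})
    (by simp), ← Fintype.card_subtype, Fintype.card_congr (Equiv.sigmaSubtype c), Fintype.card_fin]

/-- The weakly decreasing rearrangement of `v`. -/
def antitoneSort {α : Type*} [LinearOrder α] {n : ℕ} (v : Fin n → α) : Fin n → α :=
  v ∘ Tuple.sort (OrderDual.toDual ∘ v)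

theorem antitone_antitoneSort {α : Type*} [LinearOrder α] {n : ℕ} (v : Fin n → α) :
    Antitone (antitoneSort v) :=
  fun _ _ h ↦ Tuple.monotone_sort (OrderDual.toDual ∘ v) h

theorem antitoneSort_eq {α : Type*} [LinearOrder α] {n : ℕ} {v : Fin n → α}
    {π : Equiv.Perm (Fin n)} (h : Antitone (v ∘ π)) : antitoneSort v = v ∘ π :=
  Tuple.unique_antitone (antitone_antitoneSort v) h

theorem antitoneSort_eq_of_wordContent_eq {n N : ℕ} {v a : Fin n → Fin N} (ha : Antitone a)
    (h : wordContent v = wordContent a) : antitoneSort v = a := by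
  obtain ⟨π, rfl⟩ := exists_perm_of_wordContent_eq h.symm
  exact antitoneSort_eq ha

variable {R : Type*} [CommRing R]

theorem prod_toMvPolynomial_comp {n N : ℕ} (A : Matrix (Fin N) (Fin N) R) (a : Fin n → Fin N) :
    ∏ j, A.toMvPolynomial (a j) = ∑ v : Fin n → Fin N, MvPolynomial.monomial
      (Finsupp.equivFunOnFinite.symm (wordContent v)) (∏ j, A (a j) (v j)) := by
  simp only [Matrix.toMvPolynomial, prod_univ_sum, Fintype.piFinset_univ,
    equivFunOnFinite_symm_wordContent, MvPolynomial.monomial_sum_index, map_prod,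
    ← prod_mul_distrib, MvPolynomial.C_mul_monomial, mul_one]

theorem coeff_prod_toMvPolynomial_comp {n N : ℕ} (A : Matrix (Fin N) (Fin N) R) {a : Fin n → Fin N}
    (ha : Antitone a) :
    MvPolynomial.coeff (Finsupp.equivFunOnFinite.symm (wordContent a)) (∏ j, A.toMvPolynomial (a j))
      = ∑ v : Fin n → Fin N with wordContent v = wordContent a,
          ∏ j, A (antitoneSort v j) (v j) := by
  rw [prod_toMvPolynomial_comp, MvPolynomial.coeff_sum, sum_filter]
  refine sum_congr rfl fun v _ ↦ ?_
  simp only [MvPolynomial.coeff_monomial, EmbeddingLike.apply_eq_iff_eq]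
  split_ifs with h
  · rw [antitoneSort_eq_of_wordContent_eq ha h]
  · rfl

theorem coeff_prod_toMvPolynomial_pow {N : ℕ} (A : Matrix (Fin N) (Fin N) R) (m : Fin N → ℕ) :
    MvPolynomial.coeff (Finsupp.equivFunOnFinite.symm m) (∏ i, A.toMvPolynomial i ^ m i)
      = ∑ v : Fin (∑ i, m i) → Fin N with wordContent v = m,
          ∏ j, A (antitoneSort v j) (v j) := by
  obtain ⟨w, hw⟩ := exists_wordContent_eq m
  have h := coeff_prod_toMvPolynomial_comp A (antitone_antitoneSort w)
  rwa [prod_comp_eq_prod_pow_wordContent, antitoneSort, wordContent_comp_perm, hw] at h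

/-- The generating function of the words of length `n` in which a letter `c` has weight `x c`, times
`A a c` if `a` is the letter at its position in the weakly decreasing rearrangement. -/
def wordSum {N : ℕ} (A : Matrix (Fin N) (Fin N) R) (x : Fin N → R) (n : ℕ) : R :=
  ∑ v : Fin n → Fin N, (∏ j, A (antitoneSort v j) (v j)) * ∏ j, x (v j)

theorem diagonalCoeffSum_mul_left {K N : ℕ} (A : Matrix (Fin N) (Fin N) R) (x : Fin N → R) {z : R}
    (hz : z ^ (K + 1) = 0) :
    diagonalCoeffSum K A (fun i ↦ z * x i) = ∑ n ∈ range (K + 1), z ^ n * wordSum A x n := by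
  have wordContent_mem {n : ℕ} (hn : n ∈ range (K + 1)) (v : Fin n → Fin N) :
      wordContent v ∈ Fintype.piFinset fun _ : Fin N ↦ range (K + 1) := by
    refine Fintype.mem_piFinset.2 fun c ↦ mem_range.2 (lt_of_le_of_lt ?_ (mem_range.1 hn))
    exact (single_le_sum_of_canonicallyOrdered (mem_univ c)).trans_eq (sum_wordContent v)
  have group (n : ℕ) (hn : n ∈ range (K + 1)) : z ^ n * wordSum A x n
      = ∑ m ∈ Fintype.piFinset fun _ : Fin N ↦ range (K + 1), z ^ n *
        ∑ v : Fin n → Fin N with wordContent v = m,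
          (∏ j, A (antitoneSort v j) (v j)) * ∏ j, x (v j) := by
    rw [← mul_sum, sum_fiberwise_of_maps_to fun v _ ↦ wordContent_mem hn v, wordSum]
  rw [sum_congr rfl group, sum_comm, diagonalCoeffSum]
  refine sum_congr rfl fun m _ ↦ ?_
  have prod_split : ∏ i, (z * x i) ^ m i = z ^ (∑ i, m i) * ∏ i, x i ^ m i := by
    simp only [mul_pow, prod_mul_distrib, prod_pow_eq_pow_sum]
  have off_diagonal (n : ℕ) (hn : n ≠ ∑ i, m i) :
      ({v : Fin n → Fin N | wordContent v = m} : Finset (Fin n → Fin N)) = ∅ :=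
    filter_eq_empty_iff.2 fun v _ hv ↦ hn (by rw [← hv, sum_wordContent])
  rw [prod_split, coeff_prod_toMvPolynomial_pow, mul_assoc, mul_sum,
    sum_eq_single (∑ i, m i)]
  · congr 1
    refine sum_congr rfl fun v hv ↦ ?_
    rw [prod_comp_eq_prod_pow_wordContent v x, (mem_filter.1 hv).2, mul_comm]
  · intro n _ hn
    rw [off_diagonal n hn, sum_empty, mul_zero]
  · intro h
    rw [pow_eq_zero_of_le (by simpa using h) hz, zero_mul]

theorem sum_pow_mul_wordSum_mul_det {K N : ℕ} (A : Matrix (Fin N) (Fin N) R) (x : Fin N → R) {z : R}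
    (hz : z ^ (K + 1) = 0) :
    (∑ n ∈ range (K + 1), z ^ n * wordSum A x n) *
      (1 - Matrix.diagonal (fun i ↦ z * x i) * A).det = 1 := by
  rw [← diagonalCoeffSum_mul_left A x hz]
  exact macMahon_master K A fun i ↦ by rw [mul_pow, hz, zero_mul]

end Words

section Determinant

variable {R S : Type*} [CommRing R] [CommRing S]

/-- The matrix giving weight `t` to a letter above a smaller one and `1` to a letter above a larger
one, and forbidding equal letters. -/
def excMatrix {N : ℕ} (t : R) : Matrix (Fin N) (Fin N) R :=
  Matrix.of fun a c ↦ if c = a then 0 else if a < c then t else 1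

theorem excMatrix_map {N : ℕ} (f : R →+* S) (t : R) :
    (excMatrix t : Matrix (Fin N) (Fin N) R).map f = excMatrix (f t) := by
  ext a c
  simp only [excMatrix, Matrix.map_apply, Matrix.of_apply, apply_ite f, map_zero, map_one]

theorem wordSum_map {N : ℕ} (f : R →+* S) (A : Matrix (Fin N) (Fin N) R) (x : Fin N → R) (n : ℕ) :
    wordSum (A.map f) (f ∘ x) n = f (wordSum A x n) := by
  simp only [wordSum, map_sum, map_mul, map_prod, Matrix.map_apply, Function.comp_apply]

theorem exists_det_add_smul_vecMulVec {ι : Type*} [Fintype ι] [DecidableEq ι] {M : Matrix ι ι R}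
    (hM : IsUnit M.det) (u v : ι → R) :
    ∃ r, ∀ s : R, (M + s • Matrix.vecMulVec u v).det = M.det * (1 + s * r) := by
  refine ⟨(Matrix.replicateRow Unit v * M⁻¹ * Matrix.replicateCol Unit u) () (), fun s ↦ ?_⟩
  rw [← Matrix.smul_vecMulVec, Matrix.vecMulVec_eq Unit,
    Matrix.det_add_replicateCol_mul_replicateRow hM, Matrix.det_unique (n := Unit)]
  simp only [Matrix.replicateCol_smul, Matrix.mul_smul, Matrix.add_apply, Matrix.smul_apply,
    Matrix.one_apply_eq, smul_eq_mul, PUnit.default_eq_unit]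

-- Both `1 + diagonal y * (J - E)` and `1 + diagonal y * (t • J - E)`, with `J` the all-ones matrix,
-- are triangular; they and `1 - diagonal y * E` differ by multiples of one rank-one matrix.
theorem sub_one_mul_det_one_sub_diagonal_mul_excMatrix {N : ℕ} (t : R) {y : Fin N → R}
    (hy : ∀ i, IsNilpotent (y i)) :
    (t - 1) * (1 - Matrix.diagonal y * excMatrix t).det
      = t * ∏ i, (1 + y i) - ∏ i, (1 + t * y i) := by
  set U : Matrix (Fin N) (Fin N) R := Matrix.vecMulVec y 1
  set M : Matrix (Fin N) (Fin N) R := 1 - Matrix.diagonal y * excMatrix t + U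
  have det_M : M.det = ∏ i, (1 + y i) := by
    rw [Matrix.det_of_isUpperTriangular]
    · simp [M, U, excMatrix, Matrix.diagonal_mul]
    · intro i j hij
      have hij : j < i := hij
      simp [M, U, excMatrix, Matrix.diagonal_mul, hij.ne, hij.ne', hij.not_gt]
  have det_add : (M + (t - 1) • U).det = ∏ i, (1 + t * y i) := by
    rw [Matrix.det_of_isLowerTriangular]
    · refine prod_congr rfl fun i _ ↦ ?_
      simp [M, U, excMatrix, Matrix.diagonal_mul]
      ring
    · intro i j hij
      have hij : i < j := hij
      simp [M, U, excMatrix, Matrix.diagonal_mul, hij, hij.ne, hij.ne']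
      ring
  have M_unit : IsUnit M.det := by
    rw [det_M]
    exact IsUnit.prod_univ_iff.2 fun i ↦ (hy i).isUnit_one_add
  obtain ⟨r, hr⟩ := exists_det_add_smul_vecMulVec M_unit y 1
  have det_sub := hr (-1)
  rw [neg_one_smul, ← sub_eq_add_neg, add_sub_cancel_right] at det_sub
  rw [← det_add, hr, det_sub, ← det_M]
  ring

theorem coeff_eq_of_mk_eq {n : ℕ} {p r : R[X]}
    (h : Ideal.Quotient.mk (Ideal.span {X ^ (n + 1)}) p
      = Ideal.Quotient.mk (Ideal.span {X ^ (n + 1)}) r) :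
    p.coeff n = r.coeff n := by
  rw [Ideal.Quotient.mk_eq_mk_iff_sub_mem, Ideal.mem_span_singleton, X_pow_dvd_iff] at h
  exact sub_eq_zero.1 (by simpa using h n n.lt_succ_self)

theorem sum_mul_coeff_mul_wordSum {N n : ℕ} (hn : n ≠ 0) (t : R) (x : Fin N → R) :
    ∑ k ∈ range (n + 1), (t - t ^ k) * (∏ i, (1 + C (x i) * X)).coeff k *
      wordSum (excMatrix t) x (n - k) = 0 := by
  set I : Ideal R[X] := Ideal.span {X ^ (n + 1)}
  set φ : R →+* R[X] ⧸ I := (Ideal.Quotient.mk I).comp C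
  set z : R[X] ⧸ I := Ideal.Quotient.mk I X
  set E : R[X] := ∏ i, (1 + C (x i) * X)
  set W : R[X] := ∑ m ∈ range (n + 1), C (wordSum (excMatrix t) x m) * X ^ m
  have hz : z ^ (n + 1) = 0 := by
    rw [← map_pow, Ideal.Quotient.eq_zero_iff_mem]
    exact Ideal.mem_span_singleton_self _
  have mk_W : Ideal.Quotient.mk I W
      = ∑ m ∈ range (n + 1), z ^ m * wordSum (excMatrix (φ t)) (φ ∘ x) m := by
    simp only [W, ← excMatrix_map, wordSum_map, map_sum, map_mul, map_pow, mul_comm (z ^ _)]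
    rfl
  have mk_E : Ideal.Quotient.mk I (C t * E - E.comp (C t * X))
      = φ t * ∏ i, (1 + z * φ (x i)) - ∏ i, (1 + φ t * (z * φ (x i))) := by
    simp only [E, Polynomial.prod_comp, add_comp, one_comp, mul_comp, C_comp, X_comp, map_sub,
      map_mul, map_prod, map_add, map_one]
    congr! 3 <;> simp only [φ, RingHom.comp_apply] <;> ring
  have mk_eq : Ideal.Quotient.mk I ((C t * E - E.comp (C t * X)) * W)
      = Ideal.Quotient.mk I (C (t - 1)) := by
    have gf := sum_pow_mul_wordSum_mul_det (excMatrix (φ t)) (φ ∘ x) hz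
    have det_eq := sub_one_mul_det_one_sub_diagonal_mul_excMatrix (φ t) (y := fun i ↦ z * φ (x i))
      fun i ↦ ⟨n + 1, by rw [mul_pow, hz, zero_mul]⟩
    simp only [Function.comp_apply] at gf
    rw [map_mul, mk_E, mk_W, ← det_eq, C_sub, C_1, map_sub, map_one]
    linear_combination (φ t - 1) * gf
  have coeff_W (m : ℕ) (hm : m ≤ n) : W.coeff m = wordSum (excMatrix t) x m := by
    simp [W, hm]
  have h := coeff_eq_of_mk_eq mk_eq
  rw [coeff_mul, Nat.sum_antidiagonal_eq_sum_range_succ_mk, coeff_C_of_ne_zero hn] at h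
  rw [← h]
  refine sum_congr rfl fun k _ ↦ ?_
  rw [coeff_W _ (Nat.sub_le n k), coeff_sub, coeff_C_mul, comp_C_mul_X_coeff]
  ring

end Determinant

section WordsPermutations

variable {n N : ℕ}

/-- Sorting key of a position `j` carrying the letter `a`: larger letters come first, then positions
with flag `false`, then larger positions. -/
abbrev positionKey (a : Fin N) (flag : Bool) (j : Fin n) : (Fin N)ᵒᵈ ×ₗ Bool ×ₗ (Fin n)ᵒᵈ :=
  toLex (OrderDual.toDual a, toLex (flag, OrderDual.toDual j))

/-- The key of the position `j` of the word `v`, the flag telling whether the letter there exceeds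
the one above it in the weakly decreasing rearrangement. -/
def wordKey (v : Fin n → Fin N) (j : Fin n) : (Fin N)ᵒᵈ ×ₗ Bool ×ₗ (Fin n)ᵒᵈ :=
  positionKey (v j) (decide (antitoneSort v j < v j)) j

/-- The permutation of a word used in the Foata-type bijection between words and pairs of a
permutation and a compatible weakly decreasing word. -/
def wordSort (v : Fin n → Fin N) : Equiv.Perm (Fin n) := Tuple.sort (wordKey v)

/-- The key of the position `σ i` in the word `a ∘ σ⁻¹`, read off from `σ` and `a` only. -/
def permKey (σ : Equiv.Perm (Fin n)) (a : Fin n → Fin N) (i : Fin n) :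
    (Fin N)ᵒᵈ ×ₗ Bool ×ₗ (Fin n)ᵒᵈ :=
  positionKey (a i) (decide (i < σ i)) (σ i)

theorem letter_le_of_positionKey_le {a b : Fin N} {e f : Bool} {i j : Fin n}
    (h : positionKey a e i ≤ positionKey b f j) : b ≤ a :=
  Prod.Lex.monotone_fst _ _ h

theorem positionKey_lt_iff_of_letter_eq (a : Fin N) {e f : Bool} {i j : Fin n} :
    positionKey a e i < positionKey a f j ↔ e < f ∨ e = f ∧ j < i := by
  simp [positionKey, Prod.Lex.toLex_lt_toLex]

theorem wordSort_eq_iff {v : Fin n → Fin N} {σ : Equiv.Perm (Fin n)} :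
    wordSort v = σ ↔ StrictMono (wordKey v ∘ σ) := by
  have wordKey_injective : Function.Injective (wordKey v) := fun i j h ↦ by
    simpa [wordKey, positionKey] using congrArg (fun k ↦ (ofLex (ofLex k).2).2) h
  rw [wordSort, eq_comm, Tuple.eq_sort_iff]
  refine ⟨fun h ↦ h.1.strictMono_of_injective (wordKey_injective.comp σ.injective),
    fun h ↦ ⟨h.monotone, fun i j hij heq ↦ absurd heq (h hij).ne⟩⟩

theorem antitone_of_strictMono_permKey {σ : Equiv.Perm (Fin n)} {a : Fin n → Fin N}
    (h : StrictMono (permKey σ a)) : Antitone a :=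
  fun _ _ hij ↦ letter_le_of_positionKey_le (h.monotone hij)

theorem antitone_of_strictMono_wordKey_comp {v : Fin n → Fin N} {σ : Equiv.Perm (Fin n)}
    (h : StrictMono (wordKey v ∘ σ)) : Antitone (v ∘ σ) :=
  fun _ _ hij ↦ letter_le_of_positionKey_le (h.monotone hij)

theorem antitoneSort_comp_symm {a : Fin n → Fin N} (ha : Antitone a) (σ : Equiv.Perm (Fin n)) :
    antitoneSort (a ∘ σ.symm) = a := by
  have h : (a ∘ σ.symm) ∘ σ = a := by rw [Function.comp_assoc, Equiv.symm_comp_self]; rfl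
  exact (antitoneSort_eq (π := σ) (by rwa [h])).trans h

theorem letter_apply_lt_iff {a : Fin n → Fin N} (ha : Antitone a) {i j : Fin n} (h : a j ≠ a i) :
    a j < a i ↔ i < j :=
  ⟨fun hlt ↦ not_le.1 fun hji ↦ (ha hji).not_gt hlt, fun hij ↦ (ha hij.le).lt_of_ne h⟩

theorem permKey_eq_wordKey_comp {σ : Equiv.Perm (Fin n)} {a : Fin n → Fin N} (ha : Antitone a)
    (h : ∀ i, a (σ i) ≠ a i) : permKey σ a = wordKey (a ∘ σ.symm) ∘ σ := by
  funext i
  simp only [permKey, wordKey, antitoneSort_comp_symm ha, Function.comp_apply,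
    Equiv.symm_apply_apply, letter_apply_lt_iff ha (h i)]

-- If `a (σ i) = a i`, then `a` is constant between `i` and `σ i`; there `σ` decreases along equal
-- flags, which is incompatible with the flags of `i` and `σ i`.
theorem letter_apply_ne_of_strictMono_permKey {σ : Equiv.Perm (Fin n)} {a : Fin n → Fin N}
    (hσ : ∀ i, σ i ≠ i) (h : StrictMono (permKey σ a)) (i : Fin n) : a (σ i) ≠ a i := by
  intro ha
  rcases lt_or_gt_of_ne (hσ i) with hlt | hgt
  · have hkey := h hlt
    rw [permKey, permKey, ha, positionKey_lt_iff_of_letter_eq] at hkey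
    have hflag : decide (i < σ i) = false := decide_eq_false hlt.not_gt
    rw [hflag] at hkey
    rcases hkey with hkey | ⟨hkey, hdec⟩
    · exact not_lt_bot hkey
    · exact absurd hdec (of_decide_eq_false hkey)
  · have hkey := h hgt
    rw [permKey, permKey, ha, positionKey_lt_iff_of_letter_eq] at hkey
    have hflag : decide (i < σ i) = true := decide_eq_true hgt
    rw [hflag] at hkey
    rcases hkey with hkey | ⟨hkey, hdec⟩
    · exact not_top_lt hkey
    · exact absurd (of_decide_eq_true hkey.symm) hdec.not_gt

theorem wordSort_comp_symm_eq_iff {σ : Equiv.Perm (Fin n)} {a : Fin n → Fin N} :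
    (∀ j, antitoneSort (a ∘ σ.symm) j ≠ (a ∘ σ.symm) j) ∧ wordSort (a ∘ σ.symm) = σ ↔
      (∀ i, σ i ≠ i) ∧ StrictMono (permKey σ a) := by
  rw [wordSort_eq_iff]
  constructor
  · rintro ⟨hne, hkey⟩
    have ha : Antitone a := by
      simpa [Function.comp_assoc] using antitone_of_strictMono_wordKey_comp hkey
    have ha_ne (i : Fin n) : a (σ i) ≠ a i := by
      simpa [antitoneSort_comp_symm ha] using hne (σ i)
    exact ⟨fun i hi ↦ ha_ne i (congrArg a hi), permKey_eq_wordKey_comp ha ha_ne ▸ hkey⟩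
  · rintro ⟨hσ, hkey⟩
    have ha := antitone_of_strictMono_permKey hkey
    have ha_ne := letter_apply_ne_of_strictMono_permKey hσ hkey
    refine ⟨fun j ↦ ?_, permKey_eq_wordKey_comp ha ha_ne ▸ hkey⟩
    simpa [antitoneSort_comp_symm ha] using ha_ne (σ.symm j)

variable {R : Type*} [CommRing R]

theorem prod_excMatrix_comp_symm (t : R) {σ : Equiv.Perm (Fin n)} {a : Fin n → Fin N}
    (hσ : ∀ i, σ i ≠ i) (h : StrictMono (permKey σ a)) :
    ∏ j, excMatrix t (antitoneSort (a ∘ σ.symm) j) ((a ∘ σ.symm) j) = t ^ #{i | i < σ i} := by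
  have ha := antitone_of_strictMono_permKey h
  have ha_ne := letter_apply_ne_of_strictMono_permKey hσ h
  rw [antitoneSort_comp_symm ha, ← Equiv.prod_comp σ, ← prod_const, prod_filter]
  refine prod_congr rfl fun i _ ↦ ?_
  simp only [excMatrix, Matrix.of_apply, Function.comp_apply, Equiv.symm_apply_apply,
    (ha_ne i).symm, if_false, letter_apply_lt_iff ha (ha_ne i)]

theorem wordSum_excMatrix (t : R) (x : Fin N → R) :
    wordSum (excMatrix t) x n
      = ∑ σ : Equiv.Perm (Fin n) with ∀ i, σ i ≠ i, t ^ #{i | i < σ i} *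
          ∑ a : Fin n → Fin N with StrictMono (permKey σ a), ∏ j, x (a j) := by
  have weight_eq_zero (v : Fin n → Fin N) (hv : ¬∀ j, antitoneSort v j ≠ v j) :
      (∏ j, excMatrix t (antitoneSort v j) (v j)) * ∏ j, x (v j) = 0 := by
    obtain ⟨j, hj⟩ := not_forall_not.1 hv
    rw [prod_eq_zero (mem_univ j) (by simp [excMatrix, hj]), zero_mul]
  rw [wordSum, ← sum_filter_of_ne fun v _ ↦ not_imp_comm.1 (weight_eq_zero v),
    ← sum_fiberwise _ wordSort, sum_filter]
  refine sum_congr rfl fun σ _ ↦ ?_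
  have arrowCongr_eq (a : Fin n → Fin N) : σ.arrowCongr (Equiv.refl (Fin N)) a = a ∘ σ.symm := rfl
  rw [filter_filter, sum_filter, ← (σ.arrowCongr (Equiv.refl (Fin N))).sum_comp]
  simp only [arrowCongr_eq, wordSort_comp_symm_eq_iff]
  by_cases hσ : ∀ i, σ i ≠ i
  · rw [if_pos hσ, mul_sum, sum_filter]
    refine sum_congr rfl fun a _ ↦ ?_
    by_cases ha : StrictMono (permKey σ a)
    · rw [if_pos ⟨hσ, ha⟩, if_pos ha, prod_excMatrix_comp_symm t hσ ha,
        ← Equiv.prod_comp σ.symm fun j ↦ x (a j)]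
      rfl
    · rw [if_neg fun h ↦ ha h.2, if_neg ha]
  · rw [if_neg hσ]
    exact sum_eq_zero fun a _ ↦ if_neg fun h ↦ hσ h.1

end WordsPermutations

section MajorIndex

variable {n : ℕ}

theorem pval_val_add_one (σ : Equiv.Perm (Fin n)) (i : Fin n) : pval σ (i + 1) = σ i + 1 := by
  simp [pval]

theorem pval_add_one_of_lt (σ : Equiv.Perm (Fin n)) {i : ℕ} (hi : i < n) :
    pval σ (i + 1) = σ ⟨i, hi⟩ + 1 :=
  pval_val_add_one σ ⟨i, hi⟩

theorem sum_Icc_one_eq_sum_range {M : Type*} [AddCommMonoid M] (f : ℕ → M) (n : ℕ) :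
    ∑ i ∈ Icc 1 n, f i = ∑ i ∈ range n, f (i + 1) := by
  rw [range_eq_Ico, sum_Ico_add' f 0 n 1]
  rfl

theorem pexc_eq_card (σ : Equiv.Perm (Fin n)) : pexc σ = #{i | i < σ i} := by
  rw [pexc, card_filter, card_filter, sum_Icc_one_eq_sum_range, ← Fin.sum_univ_eq_sum_range]
  simp only [pval_val_add_one, Nat.add_lt_add_iff_right, Fin.lt_def]

/-- The set `DEX(σ)` of Shareshian and Wachs: the descents of the word of `σ` after its excedance
letters have been made smaller than all its other letters. -/
def dexSet (σ : Equiv.Perm (Fin n)) : Finset ℕ :=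
  {i ∈ Icc 1 (n - 1) | (pval σ i ≤ i ∧ i + 1 < pval σ (i + 1)) ∨
    ((i < pval σ i ↔ i + 1 < pval σ (i + 1)) ∧ pval σ (i + 1) < pval σ i)}

/-- The sum of the elements of `{1, …, n - 1}` outside `DEX(σ)`; it is complementary to
`maj - exc`. -/
def codex (σ : Equiv.Perm (Fin n)) : ℕ := ∑ i ∈ Icc 1 (n - 1) \ dexSet σ, i

theorem dexSet_subset (σ : Equiv.Perm (Fin n)) : dexSet σ ⊆ Icc 1 (n - 1) := filter_subset _ _

theorem sum_dexSet_add_codex (σ : Equiv.Perm (Fin n)) :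
    ∑ i ∈ dexSet σ, i + codex σ = n.choose 2 := by
  rw [codex, add_comm, sum_sdiff (dexSet_subset σ), Nat.choose_two_right, ← sum_range_id,
    sum_Icc_one_eq_sum_range]
  cases n with
  | zero => rfl
  | succ n => rw [sum_range_succ' _ n, add_zero, Nat.add_sub_cancel]

theorem sum_id_mul_succ_add_sum (e : ℕ → ℕ) (n : ℕ) :
    ∑ i ∈ Icc 1 n, i * e (i + 1) + ∑ i ∈ Icc 1 (n + 1), e i
      = ∑ i ∈ Icc 1 n, i * e i + (n + 1) * e (n + 1) := by
  induction n with
  | zero => simp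
  | succ n ih =>
    rw [sum_Icc_succ_top (by lia), sum_Icc_succ_top (by lia) e,
      sum_Icc_succ_top (by lia) fun i ↦ i * e i]
    linear_combination ih

theorem pmaj_eq_pexc_add_sum_dexSet (σ : Equiv.Perm (Fin n)) :
    pmaj σ = pexc σ + ∑ i ∈ dexSet σ, i := by
  cases n with
  | zero => simp [pmaj, pDES, pexc, dexSet]
  | succ n =>
    let e (i : ℕ) : ℕ := if i < pval σ i then 1 else 0
    have e_last : e (n + 1) = 0 :=
      if_neg (by rw [pval_add_one_of_lt σ n.lt_succ_self]; lia)
    have local_identity : ∀ i ∈ Icc 1 n,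
        (if i ∈ pDES σ then i else 0) + i * e (i + 1)
          = (if i ∈ dexSet σ then i else 0) + i * e i := by
      intro i hi
      have hmem := mem_Icc.1 hi
      obtain ⟨i, rfl⟩ := Nat.exists_eq_add_of_le' hmem.1
      have hne : pval σ (i + 1) ≠ pval σ (i + 1 + 1) := by
        rw [pval_add_one_of_lt σ (by lia), pval_add_one_of_lt σ (by lia)]
        simp [Fin.val_inj]
      simp only [pDES, dexSet, e, mem_filter, hi, true_and, Nat.add_sub_cancel]
      grind
    have hsum := sum_congr rfl local_identity
    have hparts := sum_id_mul_succ_add_sum e n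
    have hexc : pexc σ = ∑ i ∈ Icc 1 (n + 1), e i := card_filter _ _
    have sum_subset {S : Finset ℕ} (hS : S ⊆ Icc 1 n) :
        ∑ i ∈ Icc 1 n, (if i ∈ S then i else 0) = ∑ i ∈ S, i := by
      rw [← sum_filter, filter_mem_eq_inter, inter_eq_right.2 hS]
    rw [sum_add_distrib, sum_add_distrib,
      sum_subset (S := pDES σ) (filter_subset _ _), sum_subset (dexSet_subset σ)] at hsum
    rw [pmaj]
    lia

theorem pmaj_sub_pexc_add_codex (σ : Equiv.Perm (Fin n)) :
    pmaj σ - pexc σ + codex σ = n.choose 2 := by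
  rw [pmaj_eq_pexc_add_sum_dexSet, Nat.add_sub_cancel_left, sum_dexSet_add_codex]

theorem strictMono_permKey_iff {N : ℕ} (σ : Equiv.Perm (Fin (n + 1))) (a : Fin (n + 1) → Fin N) :
    StrictMono (permKey σ a) ↔
      ∀ i : Fin n, (a i.succ : ℕ) + (if (i : ℕ) + 1 ∈ dexSet σ then 0 else 1) ≤ a i.castSucc := by
  rw [Fin.strictMono_iff_lt_succ]
  refine forall_congr' fun i ↦ ?_
  have hcast := pval_val_add_one σ i.castSucc
  have hsucc := pval_val_add_one σ i.succ
  rw [Fin.val_castSucc] at hcast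
  rw [Fin.val_succ] at hsucc
  have hi : (i : ℕ) + 1 ∈ Icc 1 n := mem_Icc.2 ⟨by lia, i.2⟩
  simp only [permKey, positionKey, Prod.Lex.toLex_lt_toLex, OrderDual.toDual_lt_toDual,
    OrderDual.toDual_inj, Bool.lt_iff, decide_eq_true_iff, decide_eq_false_iff_not, dexSet,
    mem_filter, Nat.add_sub_cancel, hi, hcast, hsucc, true_and, Fin.lt_def, Fin.ext_iff,
    Fin.val_castSucc, Fin.val_succ]
  split_ifs with h <;> grind

end MajorIndex

section PrincipalSpecialization

variable {R : Type*} [CommRing R]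

/-- The `q`-Pochhammer symbol `(q; q)_n = (1 - q) (1 - q ^ 2) ⋯ (1 - q ^ n)`. -/
def qPochhammer (q : R) (n : ℕ) : R := ∏ i ∈ range n, (1 - q ^ (i + 1))

theorem qPochhammer_succ (q : R) (n : ℕ) :
    qPochhammer q (n + 1) = qPochhammer q n * (1 - q ^ (n + 1)) :=
  prod_range_succ _ _

theorem pow_mul_eq_zero_of_pow_eq_zero {q : R} {N : ℕ} (hq : q ^ N = 0) {m : ℕ} (hm : m ≠ 0) :
    (q ^ m) ^ N = 0 := by
  rw [pow_right_comm, hq, zero_pow hm]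

theorem isUnit_one_sub_pow {q : R} {N : ℕ} (hq : q ^ N = 0) {m : ℕ} (hm : m ≠ 0) :
    IsUnit (1 - q ^ m) :=
  IsNilpotent.isUnit_one_sub ⟨N, pow_mul_eq_zero_of_pow_eq_zero hq hm⟩

theorem sum_pow_of_le_mul_one_sub {r : R} {N : ℕ} (hr : r ^ N = 0) (l : ℕ) :
    (∑ x ∈ {x : Fin N | l ≤ x}, r ^ (x : ℕ)) * (1 - r) = r ^ l := by
  rw [sum_filter, Fin.sum_univ_eq_sum_range (fun x ↦ if l ≤ x then r ^ x else 0) N, ← sum_filter]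
  have hIco : {x ∈ range N | l ≤ x} = Ico l N := by
    ext x
    rw [mem_filter, mem_range, mem_Ico, and_comm]
  rw [hIco]
  rcases le_total l N with h | h
  · rw [geom_sum_Ico_mul_neg r h, hr, sub_zero]
  · rw [Ico_eq_empty_of_le h, sum_empty, zero_mul, pow_eq_zero_of_le h hr]

/-- The words `a` with last letter at least `l` and steps `a i - a (i + 1)` at least `δ i`. -/
def chainsAbove (δ : ℕ → ℕ) (n N l : ℕ) : Finset (Fin (n + 1) → Fin N) :=
  {a | (∀ i : Fin n, (a i.succ : ℕ) + δ i ≤ a i.castSucc) ∧ l ≤ a (Fin.last n)}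

theorem snoc_mem_chainsAbove_iff {δ : ℕ → ℕ} {n N l : ℕ} {b : Fin (n + 1) → Fin N} {x : Fin N} :
    (Fin.snoc b x : Fin (n + 2) → Fin N) ∈ chainsAbove δ (n + 1) N l ↔
      l ≤ x ∧ b ∈ chainsAbove δ n N (x + δ n) := by
  simp only [chainsAbove, mem_filter, mem_univ, true_and, Fin.forall_fin_succ', Fin.succ_last,
    Fin.succ_castSucc, Fin.snoc_castSucc, Fin.snoc_last, Fin.val_castSucc, Fin.val_last]
  tauto

theorem sum_chainsAbove_succ (q : R) (δ : ℕ → ℕ) (n N l : ℕ) :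
    ∑ a ∈ chainsAbove δ (n + 1) N l, ∏ j, q ^ (a j : ℕ)
      = ∑ x ∈ {x : Fin N | l ≤ x}, q ^ (x : ℕ) *
          ∑ b ∈ chainsAbove δ n N (x + δ n), ∏ j, q ^ (b j : ℕ) := by
  rw [← Fintype.sum_ite_mem, ← (Fin.snocEquiv fun _ ↦ Fin N).sum_comp, Fintype.sum_prod_type,
    sum_filter]
  refine sum_congr rfl fun x _ ↦ ?_
  rw [← Fintype.sum_ite_mem (chainsAbove δ n N (x + δ n)), mul_sum]
  split_ifs with hx
  · refine sum_congr rfl fun b _ ↦ ?_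
    simp [Fin.snocEquiv, snoc_mem_chainsAbove_iff, hx, Fin.prod_univ_castSucc, mul_comm]
  · simp [Fin.snocEquiv, snoc_mem_chainsAbove_iff, hx]

theorem sum_chainsAbove_mul_qPochhammer {q : R} {N : ℕ} (hq : q ^ N = 0) (δ : ℕ → ℕ) (n l : ℕ) :
    (∑ a ∈ chainsAbove δ n N l, ∏ j, q ^ (a j : ℕ)) * qPochhammer q (n + 1)
      = q ^ ((n + 1) * l + ∑ i ∈ range n, (i + 1) * δ i) := by
  induction n generalizing l with
  | zero =>
    rw [← Fintype.sum_ite_mem, ← (Equiv.funUnique (Fin 1) (Fin N)).symm.sum_comp]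
    simpa [chainsAbove, qPochhammer, sum_filter] using sum_pow_of_le_mul_one_sub hq l
  | succ n ih =>
    have hgeom := sum_pow_of_le_mul_one_sub
      (pow_mul_eq_zero_of_pow_eq_zero hq (Nat.add_one_ne_zero (n + 1))) l
    calc (∑ a ∈ chainsAbove δ (n + 1) N l, ∏ j, q ^ (a j : ℕ)) * qPochhammer q (n + 2)
        = (∑ x ∈ {x : Fin N | l ≤ x}, q ^ (x : ℕ) *
            ((∑ b ∈ chainsAbove δ n N (x + δ n), ∏ j, q ^ (b j : ℕ)) * qPochhammer q (n + 1))) *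
            (1 - q ^ (n + 2)) := by
          rw [sum_chainsAbove_succ, qPochhammer_succ, ← mul_assoc, sum_mul]
          simp only [mul_assoc]
      _ = (∑ x ∈ {x : Fin N | l ≤ x}, (q ^ (n + 2)) ^ (x : ℕ)) * (1 - q ^ (n + 2)) *
            q ^ ∑ i ∈ range (n + 1), (i + 1) * δ i := by
          simp only [ih, sum_mul, sum_range_succ _ n]
          refine sum_congr rfl fun x _ ↦ ?_
          ring
      _ = q ^ ((n + 1 + 1) * l + ∑ i ∈ range (n + 1), (i + 1) * δ i) := by
          rw [hgeom, ← pow_mul, ← pow_add]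

theorem strictMono_permKey_iff_mem_chainsAbove {n N : ℕ} {σ : Equiv.Perm (Fin (n + 1))}
    {a : Fin (n + 1) → Fin N} :
    StrictMono (permKey σ a) ↔
      a ∈ chainsAbove (fun i ↦ if i + 1 ∈ dexSet σ then 0 else 1) n N 0 := by
  simp [strictMono_permKey_iff, chainsAbove]

theorem codex_eq_sum_range {n : ℕ} (σ : Equiv.Perm (Fin (n + 1))) :
    codex σ = ∑ i ∈ range n, (i + 1) * if i + 1 ∈ dexSet σ then 0 else 1 := by
  rw [codex, ← sum_Icc_one_eq_sum_range fun i ↦ i * if i ∈ dexSet σ then 0 else 1,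
    ← filter_notMem_eq_sdiff, sum_filter, Nat.add_sub_cancel]
  simp

theorem sum_strictMono_permKey_mul_qPochhammer {q : R} {n N : ℕ} (hq : q ^ N = 0)
    (σ : Equiv.Perm (Fin n)) :
    (∑ a : Fin n → Fin N with StrictMono (permKey σ a), ∏ j, q ^ (a j : ℕ)) * qPochhammer q n
      = q ^ codex σ := by
  cases n with
  | zero => simp [qPochhammer, codex, Subsingleton.strictMono]
  | succ n =>
    simp only [strictMono_permKey_iff_mem_chainsAbove, filter_univ_mem]
    rw [sum_chainsAbove_mul_qPochhammer hq, mul_zero, zero_add, codex_eq_sum_range]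

/-- The polynomial `q ^ (n(n-1)/2) d_n(q⁻¹, t)`, evaluated in an arbitrary commutative ring. -/
def derangementSum (q t : R) (n : ℕ) : R :=
  ∑ σ : Equiv.Perm (Fin n) with ∀ i, σ i ≠ i, t ^ pexc σ * q ^ codex σ

theorem derangementSum_map {S : Type*} [CommRing S] (f : R →+* S) (q t : R) (n : ℕ) :
    f (derangementSum q t n) = derangementSum (f q) (f t) n := by
  simp [derangementSum]

theorem wordSum_excMatrix_mul_qPochhammer {q : R} {N : ℕ} (hq : q ^ N = 0) (t : R) (n : ℕ) :
    wordSum (excMatrix t) (fun i : Fin N ↦ q ^ (i : ℕ)) n * qPochhammer q n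
      = derangementSum q t n := by
  simp only [wordSum_excMatrix, derangementSum, sum_mul, mul_assoc, pexc_eq_card,
    sum_strictMono_permKey_mul_qPochhammer hq]

/-- The elementary symmetric polynomial `e_k(1, q, …, q ^ (n - 1))`. -/
noncomputable def qElem (q : R) (n k : ℕ) : R := (∏ i ∈ range n, (1 + C (q ^ i) * X)).coeff k

theorem qElem_map {S : Type*} [CommRing S] (f : R →+* S) (q : R) (n k : ℕ) :
    f (qElem q n k) = qElem (f q) n k := by
  simp [qElem, ← coeff_map, Polynomial.map_prod]

theorem qElem_zero_right (q : R) (n : ℕ) : qElem q n 0 = 1 := by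
  simp [qElem, coeff_zero_prod]

theorem qElem_zero_succ (q : R) (k : ℕ) : qElem q 0 (k + 1) = 0 := by
  simp [qElem, coeff_one]

theorem qElem_succ_succ (q : R) (n k : ℕ) :
    qElem q (n + 1) (k + 1) = qElem q n (k + 1) + q ^ n * qElem q n k := by
  rw [qElem, prod_range_succ, mul_add, mul_one, coeff_add, mul_left_comm, coeff_C_mul, coeff_mul_X]
  rfl

theorem one_sub_pow_mul_qElem_succ (q : R) (n k : ℕ) :
    (1 - q ^ (k + 1)) * qElem q n (k + 1) = (q ^ k - q ^ n) * qElem q n k := by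
  induction n generalizing k with
  | zero => cases k <;> simp [qElem_zero_succ]
  | succ n ih =>
    cases k with
    | zero =>
      have hn := ih 0
      simp only [qElem_succ_succ, qElem_zero_right] at hn ⊢
      linear_combination hn
    | succ k =>
      simp only [qElem_succ_succ]
      linear_combination ih (k + 1) + q ^ (n + 1) * ih k

theorem qElem_mul_qPochhammer_of_pow_eq_zero {q : R} {N : ℕ} (hq : q ^ N = 0) {n k : ℕ}
    (hk : k ≤ n) :
    qElem q N k * qPochhammer q n = qElem q n k * qPochhammer q (n - k) := by
  induction k with
  | zero => simp [qElem_zero_right]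
  | succ k ih =>
    obtain ⟨m, rfl⟩ := Nat.exists_eq_add_of_le' hk
    have hN := one_sub_pow_mul_qElem_succ q N k
    have hn := one_sub_pow_mul_qElem_succ q (m + (k + 1)) k
    have ih := ih (Nat.le_of_succ_le hk)
    rw [show m + (k + 1) - k = m + 1 by lia, qPochhammer_succ q m] at ih
    rw [Nat.add_sub_cancel]
    refine (isUnit_one_sub_pow hq (Nat.add_one_ne_zero k)).mul_left_cancel ?_
    rw [hq, sub_zero] at hN
    linear_combination
      qPochhammer q (m + (k + 1)) * hN - qPochhammer q m * hn + q ^ k * ih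

theorem sum_mul_qElem_mul_derangementSum_of_pow_eq_zero {q : R} {N : ℕ} (hq : q ^ N = 0) (t : R)
    {n : ℕ} (hn : n ≠ 0) :
    ∑ k ∈ range (n + 1), (t - t ^ k) * qElem q n k * derangementSum q t (n - k) = 0 := by
  have hrec := sum_mul_coeff_mul_wordSum hn t fun i : Fin N ↦ q ^ (i : ℕ)
  rw [Fin.prod_univ_eq_prod_range (fun i ↦ 1 + C (q ^ i) * X) N] at hrec
  rw [← zero_mul (qPochhammer q n), ← hrec, sum_mul]
  refine sum_congr rfl fun k hk ↦ ?_
  have helem := qElem_mul_qPochhammer_of_pow_eq_zero hq (mem_range_succ_iff.1 hk)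
  rw [← wordSum_excMatrix_mul_qPochhammer hq]
  change _ = (t - t ^ k) * qElem q N k * _ * _
  linear_combination
    -(t - t ^ k) * wordSum (excMatrix t) (fun i : Fin N ↦ q ^ (i : ℕ)) (n - k) * helem

theorem sum_mul_qElem_mul_derangementSum_X {n : ℕ} (hn : n ≠ 0) (t : R) :
    ∑ k ∈ range (n + 1), (C t - C t ^ k) * qElem X n k * derangementSum X (C t) (n - k)
      = (0 : R[X]) := by
  ext m
  refine coeff_eq_of_mk_eq ?_
  set f := Ideal.Quotient.mk (Ideal.span {(X : R[X]) ^ (m + 1)})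
  have hX : f X ^ (m + 1) = 0 := by
    rw [← map_pow]
    exact Ideal.Quotient.eq_zero_iff_mem.2 (Ideal.mem_span_singleton_self _)
  simp only [map_sum, map_mul, map_sub, map_pow, qElem_map, derangementSum_map, map_zero]
  exact sum_mul_qElem_mul_derangementSum_of_pow_eq_zero hX (f (C t)) hn

theorem sum_mul_qElem_mul_derangementSum (q t : R) {n : ℕ} (hn : n ≠ 0) :
    ∑ k ∈ range (n + 1), (t - t ^ k) * qElem q n k * derangementSum q t (n - k) = 0 := by
  have hX := congrArg (evalRingHom q) (sum_mul_qElem_mul_derangementSum_X hn t)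
  simpa only [map_sum, map_mul, map_sub, map_pow, qElem_map, derangementSum_map, map_zero,
    coe_evalRingHom, eval_X, eval_C] using hX

end PrincipalSpecialization

section Inversions

variable {n : ℕ}

/-- The number of non-inversions of `σ`. -/
def coinv (σ : Equiv.Perm (Fin n)) : ℕ := ∑ i, #{j | i < j ∧ σ i < σ j}

theorem pinv_eq_sum (σ : Equiv.Perm (Fin n)) : pinv σ = ∑ i, #{j | i < j ∧ σ j < σ i} := by
  simp only [pinv, card_filter, sum_product, sum_Icc_one_eq_sum_range, ← Fin.sum_univ_eq_sum_range,
    pval_val_add_one, Nat.add_lt_add_iff_right, Fin.lt_def]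

theorem pinv_add_coinv (σ : Equiv.Perm (Fin n)) : pinv σ + coinv σ = n.choose 2 := by
  rw [pinv_eq_sum, coinv, ← sum_add_distrib, Nat.choose_two_right, ← sum_range_id,
    ← sum_range_reflect, ← Fin.sum_univ_eq_sum_range]
  refine sum_congr rfl fun i _ ↦ ?_
  rw [← Fin.card_Ioi, ← card_filter_add_card_filter_not (s := Ioi i) (fun j ↦ σ j < σ i)]
  congr 2 <;> ext j
  · simp
  · have hne : i < j → σ i ≠ σ j := fun hij h ↦ hij.ne (σ.injective h)
    simp only [mem_filter, mem_univ, true_and, mem_Ioi, not_lt]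
    exact and_congr_right fun hij ↦ (hne hij).le_iff_lt.symm

/-- The permutation of `Fin (n + 1)` with `d` letters larger than its first letter, whose remaining
letters are in the same relative order as those of `τ`. -/
def prepend (d : Fin (n + 1)) (τ : Equiv.Perm (Fin n)) : Equiv.Perm (Fin (n + 1)) :=
  (finSuccEquiv n).trans (τ.optionCongr.trans (finSuccEquiv' d.rev).symm)

@[simp]
theorem prepend_zero (d : Fin (n + 1)) (τ : Equiv.Perm (Fin n)) : prepend d τ 0 = d.rev := by
  simp [prepend]

@[simp]
theorem prepend_succ (d : Fin (n + 1)) (τ : Equiv.Perm (Fin n)) (i : Fin n) :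
    prepend d τ i.succ = d.rev.succAbove (τ i) := by
  simp [prepend]

theorem prepend_bijective :
    Function.Bijective fun p : Fin (n + 1) × Equiv.Perm (Fin n) ↦ prepend p.1 p.2 := by
  rw [Fintype.bijective_iff_injective_and_card]
  refine ⟨fun ⟨d, τ⟩ ⟨e, υ⟩ h ↦ ?_, by simp [Fintype.card_perm, Nat.factorial_succ]⟩
  have happly (i : Fin (n + 1)) : prepend d τ i = prepend e υ i := DFunLike.congr_fun h i
  obtain rfl : d = e := by simpa using happly 0
  have hτ : τ = υ := Equiv.ext fun i ↦ by simpa using happly i.succ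
  rw [hτ]

theorem card_lt_prepend_zero (d : Fin (n + 1)) (τ : Equiv.Perm (Fin n)) :
    #{j | prepend d τ 0 < prepend d τ j} = d := by
  have hcard : #{j | prepend d τ 0 < prepend d τ j} = #(Ioi d.rev) := by
    rw [← card_map (prepend d τ).toEmbedding]
    congr 1
    ext j
    simp
  rw [hcard, Fin.card_Ioi, Fin.val_rev]
  lia

theorem coinv_prepend (d : Fin (n + 1)) (τ : Equiv.Perm (Fin n)) :
    coinv (prepend d τ) = d + coinv τ := by
  have hzero : #{j | 0 < j ∧ prepend d τ 0 < prepend d τ j} = (d : ℕ) := by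
    rw [← card_lt_prepend_zero d τ]
    congr 1
    ext j
    simp only [mem_filter, mem_univ, true_and, and_iff_right_iff_imp, Fin.pos_iff_ne_zero]
    rintro h rfl
    exact h.false
  rw [coinv, Fin.sum_univ_succ, hzero, coinv]
  simp [Fin.card_filter_univ_succ, Fin.succAbove_lt_succAbove_iff]

/-- The word of length `n` recording which of the positions `1, …, n` of `σ` are descents. -/
def descentWord (σ : Equiv.Perm (Fin (n + 1))) : List Bool :=
  List.ofFn fun i : Fin n ↦ decide (σ i.succ < σ i.castSucc)

theorem descentWord_prepend_prepend (d : Fin (n + 2)) (e : Fin (n + 1)) (τ : Equiv.Perm (Fin n)) :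
    descentWord (prepend d (prepend e τ))
      = decide (d ≤ e.castSucc) :: descentWord (prepend e τ) := by
  rw [descentWord, List.ofFn_succ, descentWord]
  congr 1
  · simp only [Fin.castSucc_zero, prepend_succ, prepend_zero, Fin.succAbove_lt_iff_castSucc_lt,
      ← Fin.rev_succ, Fin.rev_lt_rev, Fin.le_castSucc_iff]
  · simp [Fin.succAbove_lt_succAbove_iff]

end Inversions

section Runs

variable {R : Type*} [CommRing R]

/-- The weight of a permutation whose descents are recorded by the given word, when each maximal
ascending run of `m` letters has weight `a m`, except that the first run has weight `f (m - 1)`. -/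
def runWeight (a : ℕ → R) : (ℕ → R) → List Bool → R
  | f, [] => f 0
  | f, false :: w => runWeight a (fun m ↦ f (m + 1)) w
  | f, true :: w => f 0 * runWeight a (fun m ↦ a (m + 1)) w

theorem runWeight_add (a f g : ℕ → R) (w : List Bool) :
    runWeight a (fun m ↦ f m + g m) w = runWeight a f w + runWeight a g w := by
  induction w generalizing f g with
  | nil => rfl
  | cons b w ih =>
    cases b
    · exact ih _ _
    · exact add_mul _ _ _

theorem runWeight_const_mul (a f : ℕ → R) (c : R) (w : List Bool) :
    runWeight a (fun m ↦ c * f m) w = c * runWeight a f w := by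
  induction w generalizing f with
  | nil => rfl
  | cons b w ih =>
    cases b
    · exact ih _
    · exact mul_assoc _ _ _

theorem runWeight_cons (a f : ℕ → R) (b : Bool) (w : List Bool) :
    runWeight a f (b :: w)
      = if b then f 0 * runWeight a (fun m ↦ a (m + 1)) w
        else runWeight a (fun m ↦ f (m + 1)) w := by
  cases b <;> rfl

/-- The generating function of `Perm (Fin n)` by non-inversions and run weights, where each
permutation is preceded by an extra letter smaller than exactly `d` of its letters; the run of that
letter is weighted by `f`. -/
def prefixedRunSum (q : R) (a f : ℕ → R) {n : ℕ} (d : Fin (n + 1)) : R :=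
  ∑ τ : Equiv.Perm (Fin n), q ^ coinv τ * runWeight a f (descentWord (prepend d τ))

theorem prefixedRunSum_add (q : R) (a f g : ℕ → R) {n : ℕ} (d : Fin (n + 1)) :
    prefixedRunSum q a (fun m ↦ f m + g m) d
      = prefixedRunSum q a f d + prefixedRunSum q a g d := by
  simp only [prefixedRunSum, runWeight_add, mul_add, sum_add_distrib]

theorem prefixedRunSum_const_mul (q : R) (a f : ℕ → R) (c : R) {n : ℕ} (d : Fin (n + 1)) :
    prefixedRunSum q a (fun m ↦ c * f m) d = c * prefixedRunSum q a f d := by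
  simp only [prefixedRunSum, runWeight_const_mul, mul_sum, mul_left_comm c]

theorem prefixedRunSum_zero (q : R) (a f : ℕ → R) (d : Fin 1) : prefixedRunSum q a f d = f 0 := by
  simp [prefixedRunSum, coinv, descentWord, runWeight]

theorem prefixedRunSum_succ (q : R) (a f : ℕ → R) {n : ℕ} (d : Fin (n + 2)) :
    prefixedRunSum q a f d
      = ∑ e : Fin (n + 1), q ^ (e : ℕ) *
          if d ≤ e.castSucc then f 0 * prefixedRunSum q a (fun m ↦ a (m + 1)) e
          else prefixedRunSum q a (fun m ↦ f (m + 1)) e := by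
  rw [prefixedRunSum, ← prepend_bijective.sum_comp, Fintype.sum_prod_type]
  refine sum_congr rfl fun e _ ↦ ?_
  simp only [coinv_prepend, descentWord_prepend_prepend, runWeight_cons, decide_eq_true_eq,
    prefixedRunSum, pow_add, mul_sum, mul_assoc]
  split_ifs
  · simp only [mul_sum, mul_left_comm (f 0)]
  · rw [mul_sum]

/-- The generating function of `Perm (Fin n)` by non-inversions and run weights. -/
def runSum (q : R) (a : ℕ → R) (n : ℕ) : R := prefixedRunSum q a a (Fin.last n)

theorem runSum_zero (q : R) (a : ℕ → R) : runSum q a 0 = a 0 := prefixedRunSum_zero q a a _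

theorem runSum_succ (q : R) (a : ℕ → R) (n : ℕ) :
    runSum q a (n + 1)
      = ∑ e : Fin (n + 1), q ^ (e : ℕ) * prefixedRunSum q a (fun m ↦ a (m + 1)) e := by
  simp [runSum, prefixedRunSum_succ, (Fin.castSucc_lt_last _).not_ge]

/-- The coefficients of the product of two power series. -/
def cauchyProd (h a : ℕ → R) (m : ℕ) : R := ∑ k ∈ range (m + 1), h k * a (m - k)

theorem cauchyProd_zero (h a : ℕ → R) : cauchyProd h a 0 = h 0 * a 0 := by
  simp [cauchyProd]

theorem cauchyProd_succ (h a : ℕ → R) (m : ℕ) :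
    cauchyProd h a (m + 1) = cauchyProd (fun k ↦ h (k + 1)) a m + h 0 * a (m + 1) := by
  simp only [cauchyProd, sum_range_succ' _ (m + 1), Nat.add_sub_add_right, Nat.sub_zero]

theorem sum_pow_mul_qElem (q : R) (d k : ℕ) :
    ∑ e ∈ range d, q ^ e * qElem q e k = qElem q d (k + 1) := by
  induction d with
  | zero => rw [qElem_zero_succ, range_zero, sum_empty]
  | succ d ih => rw [sum_range_succ, ih, qElem_succ_succ]

theorem sum_filter_castSucc_lt (f : ℕ → R) {n : ℕ} (d : Fin (n + 2)) :
    ∑ e : Fin (n + 1) with e.castSucc < d, f e = ∑ e ∈ range d, f e := by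
  simp only [sum_filter, Fin.lt_def, Fin.val_castSucc]
  rw [Fin.sum_univ_eq_sum_range (fun e ↦ if e < d then f e else 0), ← sum_filter]
  congr 1
  ext e
  simp only [mem_filter, mem_range]
  lia

theorem prefixedRunSum_cauchyProd (q : R) {a : ℕ → R} (ha : a 0 = 1) (h : ℕ → R) {n : ℕ}
    (d : Fin (n + 1)) :
    prefixedRunSum q a (cauchyProd h a) d
      = ∑ k ∈ range (n + 1), h k * qElem q d k * runSum q a (n - k) := by
  induction n generalizing h with
  | zero => simp [prefixedRunSum_zero, cauchyProd_zero, qElem_zero_right, runSum_zero]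
  | succ n ih =>
    have split_term (e : Fin (n + 1)) :
        (if d ≤ e.castSucc then cauchyProd h a 0 * prefixedRunSum q a (fun m ↦ a (m + 1)) e
          else prefixedRunSum q a (fun m ↦ cauchyProd h a (m + 1)) e)
        = h 0 * prefixedRunSum q a (fun m ↦ a (m + 1)) e +
          if e.castSucc < d then prefixedRunSum q a (cauchyProd (fun k ↦ h (k + 1)) a) e
          else 0 := by
      simp only [cauchyProd_succ, prefixedRunSum_add, prefixedRunSum_const_mul, cauchyProd_zero, ha,
        mul_one, ← not_lt, ite_not]
      split_ifs <;> ring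
    have descents : ∑ e : Fin (n + 1) with e.castSucc < d,
          q ^ (e : ℕ) * prefixedRunSum q a (cauchyProd (fun k ↦ h (k + 1)) a) e
        = ∑ k ∈ range (n + 1), h (k + 1) * qElem q d (k + 1) * runSum q a (n - k) := by
      simp only [ih, mul_sum]
      rw [sum_comm]
      refine sum_congr rfl fun k _ ↦ ?_
      rw [← sum_pow_mul_qElem, ← sum_filter_castSucc_lt, mul_sum, sum_mul]
      exact sum_congr rfl fun e _ ↦ by ring
    rw [prefixedRunSum_succ]
    simp only [split_term, mul_add, sum_add_distrib, mul_ite, mul_zero]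
    rw [← sum_filter, descents, sum_range_succ' _ (n + 1), qElem_zero_right, mul_one, Nat.sub_zero,
      runSum_succ, mul_sum, add_comm]
    simp only [mul_left_comm (h 0), Nat.add_sub_add_right]

theorem runSum_succ_of_eq_cauchyProd (q : R) {a h : ℕ → R} (ha : a 0 = 1)
    (hah : ∀ m, a (m + 1) = cauchyProd h a m) (n : ℕ) :
    runSum q a (n + 1)
      = ∑ k ∈ range (n + 1), h k * qElem q (n + 1) (k + 1) * runSum q a (n - k) := by
  simp only [runSum_succ, hah, prefixedRunSum_cauchyProd q ha, mul_sum]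
  rw [sum_comm]
  refine sum_congr rfl fun k _ ↦ ?_
  rw [← sum_pow_mul_qElem, ← Fin.sum_univ_eq_sum_range, mul_sum, sum_mul]
  exact sum_congr rfl fun e _ ↦ by ring

end Runs

section Comparison

variable {R : Type*} [CommRing R]

/-- The weight of a maximal ascending run in the `γ`-expansion. -/
def gammaWeight (t : R) : ℕ → R
  | 0 => 1
  | 1 => 0
  | m + 2 => t * (1 + t) ^ m

theorem sum_range_gammaWeight (t : R) (m : ℕ) :
    ∑ k ∈ range (m + 2), gammaWeight t k = (1 + t) ^ m := by
  induction m with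
  | zero => simp [sum_range_succ, gammaWeight]
  | succ m ih => rw [sum_range_succ, ih, gammaWeight]; ring

theorem gammaWeight_succ (t : R) (m : ℕ) :
    gammaWeight t (m + 1) = cauchyProd (fun k ↦ ∑ i ∈ range k, t ^ (i + 1)) (gammaWeight t) m := by
  have shift (m : ℕ) :
      cauchyProd (fun k ↦ ∑ i ∈ range (k + 1), t ^ (i + 1)) (gammaWeight t) m
        = t * ∑ k ∈ range (m + 1), gammaWeight t k
          + t * cauchyProd (fun k ↦ ∑ i ∈ range k, t ^ (i + 1)) (gammaWeight t) m := by
    rw [← sum_range_reflect, cauchyProd, cauchyProd, mul_sum, mul_sum, ← sum_add_distrib]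
    refine sum_congr rfl fun k _ ↦ ?_
    simp only [sum_range_succ' _ k, pow_succ t, ← sum_mul, Nat.add_sub_cancel]
    ring
  induction m with
  | zero => simp [gammaWeight, cauchyProd_zero]
  | succ m ih =>
    rw [cauchyProd_succ, shift, ← ih]
    cases m with
    | zero => simp [gammaWeight]
    | succ m =>
      rw [sum_range_gammaWeight, gammaWeight, gammaWeight, range_zero, sum_empty]
      ring

theorem derangementSum_zero (q t : R) : derangementSum q t 0 = 1 := by
  simp [derangementSum, pexc, codex]

theorem sub_one_mul_derangementSum_succ (q t : R) (n : ℕ) :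
    (t - 1) * derangementSum q t (n + 1)
      = (t - 1) * ∑ k ∈ range (n + 1), (∑ i ∈ range k, t ^ (i + 1)) *
          qElem q (n + 1) (k + 1) * derangementSum q t (n - k) := by
  have hgeom (k : ℕ) : (t - 1) * ∑ i ∈ range k, t ^ (i + 1) = t ^ (k + 1) - t := by
    simp only [pow_succ, ← sum_mul]
    linear_combination t * mul_geom_sum t k
  have hrec := sum_mul_qElem_mul_derangementSum q t n.add_one_ne_zero
  rw [sum_range_succ', qElem_zero_right, pow_zero, mul_one, Nat.sub_zero] at hrec
  rw [eq_neg_of_add_eq_zero_right hrec, mul_sum, ← sum_neg_distrib]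
  refine sum_congr rfl fun k _ ↦ ?_
  rw [Nat.add_sub_add_right]
  linear_combination -qElem q (n + 1) (k + 1) * derangementSum q t (n - k) * hgeom k

-- The factor `t - 1` can be cancelled for an indeterminate `t`.
theorem derangementSum_succ (q t : R) (n : ℕ) :
    derangementSum q t (n + 1)
      = ∑ k ∈ range (n + 1), (∑ i ∈ range k, t ^ (i + 1)) *
          qElem q (n + 1) (k + 1) * derangementSum q t (n - k) := by
  have hX := (monic_X_sub_C (1 : R)).isRegular.left (sub_one_mul_derangementSum_succ (C q) X n)
  simpa only [map_sum, map_mul, map_pow, qElem_map, derangementSum_map, coe_evalRingHom, eval_X,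
    eval_C] using congrArg (evalRingHom t) hX

theorem derangementSum_eq_runSum (q t : R) (n : ℕ) :
    derangementSum q t n = runSum q (gammaWeight t) n := by
  induction n using Nat.strong_induction_on with
  | h n ih =>
    cases n with
    | zero => rw [derangementSum_zero, runSum_zero, gammaWeight]
    | succ n =>
      rw [derangementSum_succ, runSum_succ_of_eq_cauchyProd q rfl (gammaWeight_succ t)]
      exact sum_congr rfl fun k _ ↦ by rw [ih (n - k) (by lia)]

end Comparison

section GammaExpansion

variable {R : Type*} [CommRing R]

/-- The word `w` has no two consecutive letters `true`, even after `b` has been put before it and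
`true` after it. -/
def IsSparse (b : Bool) (w : List Bool) : Prop :=
  (b :: w ++ [true]).IsChain fun x y ↦ ¬(x = true ∧ y = true)

theorem isSparse_cons_iff {b c : Bool} {w : List Bool} :
    IsSparse b (c :: w) ↔ ¬(b = true ∧ c = true) ∧ IsSparse c w := by
  simp [IsSparse, List.isChain_cons_cons]

theorem isSparse_nil_iff {b : Bool} : IsSparse b [] ↔ b = false := by
  simp [IsSparse]

-- Every `true` of a sparse word, as well as the final one, is preceded by a `false`.
theorem IsSparse.two_mul_count_add_two_le {m : ℕ} {w : List Bool}
    (h : IsSparse (decide (m = 0)) w) : 2 * w.count true + 2 ≤ m + 1 + w.length := by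
  induction w generalizing m with
  | nil =>
    have hm : m ≠ 0 := by simpa [isSparse_nil_iff] using h
    simp only [List.count_nil, List.length_nil]
    lia
  | cons b w ih =>
    obtain ⟨hb, hw⟩ := isSparse_cons_iff.1 h
    cases b
    · have hlen := ih (m := m + 1) hw
      rw [List.count_cons_of_ne Bool.false_ne_true, List.length_cons]
      lia
    · obtain ⟨m, rfl⟩ := Nat.exists_eq_succ_of_ne_zero (by simpa using hb : m ≠ 0)
      have hlen := ih (m := 0) hw
      rw [List.count_cons_self, List.length_cons]
      lia

theorem runWeight_shift_false_cons (a f : ℕ → R) (m : ℕ) (w : List Bool) :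
    runWeight a (fun i ↦ f (i + m)) (false :: w) = runWeight a (fun i ↦ f (i + (m + 1))) w := by
  simp only [runWeight, add_assoc, add_comm 1 m]

theorem runWeight_gammaWeight_of_isSparse (t : R) {m : ℕ} {w : List Bool}
    (h : IsSparse (decide (m = 0)) w) :
    runWeight (gammaWeight t) (fun i ↦ gammaWeight t (i + (m + 1))) w
      = t ^ (w.count true + 1) * (1 + t) ^ (m + w.length - 1 - 2 * w.count true) := by
  induction w generalizing m with
  | nil =>
    obtain ⟨m, rfl⟩ := Nat.exists_eq_succ_of_ne_zero (by simpa [isSparse_nil_iff] using h : m ≠ 0)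
    simp [runWeight, gammaWeight]
  | cons b w ih =>
    obtain ⟨hb, hw⟩ := isSparse_cons_iff.1 h
    cases b
    · have hrun := ih (m := m + 1) hw
      rw [runWeight_shift_false_cons, hrun, List.count_cons_of_ne Bool.false_ne_true,
        List.length_cons, add_assoc m, add_comm 1 w.length]
    · obtain ⟨m, rfl⟩ := Nat.exists_eq_succ_of_ne_zero (by simpa using hb : m ≠ 0)
      have hlen := IsSparse.two_mul_count_add_two_le (m := 0) hw
      have hexp : m + 1 + (w.length + 1) - 1 - 2 * (w.count true + 1)
          = m + (0 + w.length - 1 - 2 * w.count true) := by lia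
      rw [runWeight, List.count_cons_self, List.length_cons, ih (m := 0) hw, hexp, zero_add,
        gammaWeight]
      ring

theorem runWeight_gammaWeight_of_not_isSparse (t : R) {m : ℕ} {w : List Bool}
    (h : ¬IsSparse (decide (m = 0)) w) :
    runWeight (gammaWeight t) (fun i ↦ gammaWeight t (i + (m + 1))) w = 0 := by
  induction w generalizing m with
  | nil =>
    obtain rfl : m = 0 := by simpa [isSparse_nil_iff] using h
    simp [runWeight, gammaWeight]
  | cons b w ih =>
    rw [isSparse_cons_iff] at h
    cases b
    · rw [runWeight_shift_false_cons]
      exact ih (m := m + 1) fun hw ↦ h ⟨by simp, hw⟩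
    · rw [runWeight]
      rcases eq_or_ne m 0 with rfl | hm
      · rw [gammaWeight, zero_mul]
      · rw [ih (m := 0) fun hw ↦ h ⟨by simpa using hm, hw⟩, mul_zero]

theorem count_true_ofFn {n : ℕ} (f : Fin n → Bool) :
    (List.ofFn f).count true = #{i | f i} := by
  induction n with
  | zero => simp
  | succ n ih =>
    rw [List.ofFn_succ, List.count_cons, ih, Fin.card_filter_univ_succ, add_comm]
    cases f 0 <;> simp [add_comm]

theorem add_one_mem_pDES_iff {n : ℕ} {σ : Equiv.Perm (Fin (n + 1))} (i : Fin n) :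
    (i : ℕ) + 1 ∈ pDES σ ↔ σ i.succ < σ i.castSucc := by
  have hcast := pval_val_add_one σ i.castSucc
  have hsucc := pval_val_add_one σ i.succ
  rw [Fin.val_castSucc] at hcast
  rw [Fin.val_succ] at hsucc
  have hi : (i : ℕ) + 1 ∈ Icc 1 n := mem_Icc.2 ⟨by lia, i.2⟩
  rw [pDES, mem_filter, hcast, hsucc, Nat.add_sub_cancel, and_iff_right hi,
    Nat.add_lt_add_iff_right, Fin.lt_def]

theorem descentWord_eq_ofFn_mem {n : ℕ} (σ : Equiv.Perm (Fin (n + 1))) :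
    descentWord σ = List.ofFn fun i : Fin n ↦ decide ((i : ℕ) + 1 ∈ pDES σ) := by
  simp only [descentWord, add_one_mem_pDES_iff]

theorem count_descentWord {n : ℕ} (σ : Equiv.Perm (Fin (n + 1))) :
    (descentWord σ).count true = #(pDES σ) := by
  have hsub : pDES σ ⊆ Icc 1 n := filter_subset _ _
  rw [descentWord_eq_ofFn_mem, count_true_ofFn, card_filter]
  simp only [decide_eq_true_eq]
  rw [Fin.sum_univ_eq_sum_range (fun i ↦ if i + 1 ∈ pDES σ then 1 else 0),
    ← sum_Icc_one_eq_sum_range fun i ↦ if i ∈ pDES σ then 1 else 0, ← card_filter,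
    filter_mem_eq_inter, inter_eq_right.2 hsub]

theorem isSparse_descentWord_iff {n : ℕ} (hn : n ≠ 0) {σ : Equiv.Perm (Fin (n + 1))} :
    IsSparse true (descentWord σ) ↔ pDES σ ⊆ Icc 2 (n - 1) ∧ NoTwoConsec (pDES σ) := by
  have hsub : pDES σ ⊆ Icc 1 n := filter_subset _ _
  have hword : true :: descentWord σ ++ [true] = List.ofFn fun i : Fin (n + 2) ↦
      decide ((i : ℕ) = 0 ∨ (i : ℕ) = n + 1 ∨ (i : ℕ) ∈ pDES σ) := by
    rw [List.ofFn_succ, List.ofFn_succ', descentWord_eq_ofFn_mem, List.concat_eq_append]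
    simp [(Fin.is_lt _).ne]
  rw [IsSparse, hword, List.isChain_ofFn]
  simp only [decide_eq_true_eq]
  constructor
  · intro h
    have hconsec (i : ℕ) (hi : i ∈ pDES σ) : i ≠ 1 ∧ i ≠ n ∧ i + 1 ∉ pDES σ := by
      have hmem := mem_Icc.1 (hsub hi)
      have hprev := h (i - 1) (by lia)
      have hnext := h i (by lia)
      simp only [Nat.sub_add_cancel hmem.1] at hprev
      grind
    refine ⟨fun i hi ↦ mem_Icc.2 ?_, fun i hi ↦ (hconsec i hi).2.2⟩
    have hmem := mem_Icc.1 (hsub hi)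
    obtain ⟨hone, hlast, -⟩ := hconsec i hi
    lia
  · rintro ⟨hIcc, hconsec⟩ i hi ⟨h₁, h₂⟩
    have hmem (j : ℕ) (hj : j ∈ pDES σ) : 2 ≤ j ∧ j ≤ n - 1 := mem_Icc.1 (hIcc hj)
    grind [hmem i, hmem (i + 1), hconsec i]

theorem runSum_gammaWeight (q t : R) {n : ℕ} (hn : 2 ≤ n) :
    runSum q (gammaWeight t) n
      = ∑ σ : Equiv.Perm (Fin n) with pDES σ ⊆ Icc 2 (n - 2) ∧ NoTwoConsec (pDES σ),
          q ^ coinv σ * (t ^ (#(pDES σ) + 1) * (1 + t) ^ (n - 2 - 2 * #(pDES σ))) := by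
  obtain ⟨n, rfl⟩ := Nat.exists_eq_add_of_le' (Nat.le_of_succ_le hn)
  have hsparse {σ : Equiv.Perm (Fin (n + 1))} := isSparse_descentWord_iff (n := n) (by lia) (σ := σ)
  rw [runSum, prefixedRunSum, sum_filter]
  refine sum_congr rfl fun σ _ ↦ ?_
  have hword : descentWord (prepend (Fin.last (n + 1)) σ) = false :: descentWord σ := by
    obtain ⟨⟨e, τ⟩, rfl⟩ := prepend_bijective.surjective σ
    simp [descentWord_prepend_prepend]
  have hlength : (descentWord σ).length = n := List.length_ofFn
  rw [hword, runWeight]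
  split_ifs with h
  · have hweight := runWeight_gammaWeight_of_isSparse t (m := 0) (hsparse.2 h)
    rw [count_descentWord, hlength, zero_add n] at hweight
    exact congrArg _ hweight
  · rw [runWeight_gammaWeight_of_not_isSparse t (m := 0) (mt hsparse.1 h), mul_zero]

end GammaExpansion

section Conclusion

theorem pow_mul_inv_pow {K : Type*} [Field K] {q : K} (hq : q ≠ 0) {a b m : ℕ}
    (h : a + b = m) : q ^ m * q⁻¹ ^ b = q ^ a := by
  rw [← h, inv_pow, pow_add, mul_assoc, mul_inv_cancel₀ (pow_ne_zero b hq), mul_one]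

theorem sum_derangements_pow_maj_sub_exc {K : Type*} [Field K] {q : K} (hq : q ≠ 0) (t : K) {n : ℕ}
    (hn : 2 ≤ n) :
    ∑ σ : Equiv.Perm (Fin n) with ∀ i, σ i ≠ i, q ^ (pmaj σ - pexc σ) * t ^ pexc σ
      = ∑ σ : Equiv.Perm (Fin n) with pDES σ ⊆ Icc 2 (n - 2) ∧ NoTwoConsec (pDES σ),
          q ^ pinv σ * (t ^ (#(pDES σ) + 1) * (1 + t) ^ (n - 2 - 2 * #(pDES σ))) := by
  have hder : ∑ σ : Equiv.Perm (Fin n) with ∀ i, σ i ≠ i, q ^ (pmaj σ - pexc σ) * t ^ pexc σ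
      = q ^ n.choose 2 * derangementSum q⁻¹ t n := by
    rw [derangementSum, mul_sum]
    refine sum_congr rfl fun σ _ ↦ ?_
    rw [← pow_mul_inv_pow hq (pmaj_sub_pexc_add_codex σ)]
    ring
  rw [hder, derangementSum_eq_runSum, runSum_gammaWeight _ _ hn, mul_sum]
  refine sum_congr rfl fun σ _ ↦ ?_
  rw [← mul_assoc, pow_mul_inv_pow hq (pinv_add_coinv σ)]

theorem dpoly_eq_sum {n : ℕ} (hn : 2 ≤ n) :
    dpoly n
      = ∑ σ : Equiv.Perm (Fin n) with pDES σ ⊆ Icc 2 (n - 2) ∧ NoTwoConsec (pDES σ),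
          C (X ^ pinv σ) * (X ^ (#(pDES σ) + 1) * (1 + X) ^ (n - 2 - 2 * #(pDES σ))) := by
  have hinj : Function.Injective (algebraMap ℤ[X][X] (FractionRing ℤ[X][X])) :=
    IsFractionRing.injective _ _
  have hq : algebraMap ℤ[X][X] (FractionRing ℤ[X][X]) (C X) ≠ 0 := by simp
  apply hinj
  simpa [dpoly] using sum_derangements_pow_maj_sub_exc hq (algebraMap ℤ[X][X] _ X) hn

theorem two_mul_card_pDES_add_two_le {n : ℕ} {σ : Equiv.Perm (Fin n)} (hn : 2 ≤ n)
    (hIcc : pDES σ ⊆ Icc 2 (n - 2)) (hσ : NoTwoConsec (pDES σ)) : 2 * #(pDES σ) + 2 ≤ n := by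
  obtain ⟨n, rfl⟩ := Nat.exists_eq_add_of_le' (Nat.le_of_succ_le hn)
  have hlen := IsSparse.two_mul_count_add_two_le (m := 0)
    ((isSparse_descentWord_iff (by lia)).2 ⟨hIcc, hσ⟩)
  rw [count_descentWord, descentWord, List.length_ofFn] at hlen
  lia

end Conclusion

/-- γ-expansion of the `q,t`-derangement polynomial:
`d_n(q,t) = Σ_k ξ⁰_{n,k}(q) t^{k+1} (1+t)^{n-2-2k}` with
`ξ⁰_{n,k}(q) = Σ q^{inv(σ)}` over all `σ ∈ S_n` with `DES(σ) ⊆ [2,n-2]`,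
no two consecutive descents, and exactly `k` descents. -/
theorem dpoly_gamma (n : ℕ) (hn : 2 ≤ n) :
    dpoly n = ∑ k ∈ Finset.range ((n - 2) / 2 + 1),
      Polynomial.C (∑ σ ∈ Finset.univ.filter
            (fun σ : Equiv.Perm (Fin n) =>
              pDES σ ⊆ Finset.Icc 2 (n - 2) ∧ NoTwoConsec (pDES σ) ∧ (pDES σ).card = k),
          (Polynomial.X : Polynomial ℤ) ^ pinv σ) *
        Polynomial.X ^ (k + 1) * (1 + Polynomial.X) ^ (n - 2 - 2 * k) := by
  have hcard (σ : Equiv.Perm (Fin n))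
      (hσ : σ ∈ ({σ | pDES σ ⊆ Icc 2 (n - 2) ∧ NoTwoConsec (pDES σ)} : Finset _)) :
      #(pDES σ) ∈ range ((n - 2) / 2 + 1) := by
    obtain ⟨hIcc, hconsec⟩ := (mem_filter.1 hσ).2
    have hle := two_mul_card_pDES_add_two_le hn hIcc hconsec
    exact mem_range.2 (by lia)
  rw [dpoly_eq_sum hn, ← sum_fiberwise_of_maps_to hcard]
  refine sum_congr rfl fun k _ ↦ ?_
  simp only [filter_filter, and_assoc, map_sum, sum_mul]
  refine sum_congr rfl fun σ hσ ↦ ?_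
  rw [(mem_filter.1 hσ).2.2.2, mul_assoc]
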